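/- arXiv:2502.12069 — 5 statements merged into one kernel-verified Lean document; each statement's English description precedes it below -/
import Mathlib

section
/- Chain-collapse identity (method of joint reliability, exact case of Lemma 3): let Ω be a finite set, m ≥ 0, k a natural number, and p_j : Ω → [0,1] for 0 ≤ j ≤ m. Then the sum, over all chains of subsets Ω ⊇ s_0 ⊇ s_1 ⊇ … ⊇ s_m with |s_m| ≥ k, of ∏_{j=0}^{m} [ ∏_{u ∈ s_j} p_j(u) · ∏_{v ∈ s_{j−1} \ s_j} (1 − p_j(v)) ] (with s_{−1} := Ω) equals the single sum, over all subsets s ⊆ Ω with |s| ≥ k, of ∏_{u ∈ s} (∏_{j=0}^{m} p_j(u)) · ∏_{v ∈ Ω \ s} (1 − ∏_{j=0}^{m} p_j(v)). -/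
open Finset

/-- One-phase transition weight. -/
noncomputable def phaseW {V : Type*} [DecidableEq V] (p : V → ℝ) (a b : Finset V) : ℝ :=
  if b ⊆ a then (∏ u ∈ b, p u) * ∏ v ∈ a \ b, (1 - p v) else 0

lemma phaseW_comp {V : Type*} [Fintype V] [DecidableEq V] (q p : V → ℝ) (t : Finset V) :
    ∑ a : Finset V, phaseW q univ a * phaseW p a t = phaseW (fun u => q u * p u) univ t := by
  have h1 : phaseW (fun u => q u * p u) univ t
      = (∏ u ∈ t, q u * p u) * ∏ v ∈ univ \ t, (q v * (1 - p v) + (1 - q v)) := by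
    simp only [phaseW, subset_univ, if_true]
    congr 1
    exact prod_congr rfl fun v _ => by ring
  rw [h1, Finset.prod_add, mul_sum]
  have h2 : ∀ a : Finset V, phaseW q univ a * phaseW p a t =
      if t ⊆ a then phaseW q univ a * phaseW p a t else 0 := by
    intro a
    by_cases h : t ⊆ a <;> simp [phaseW, h]
  rw [sum_congr rfl fun a _ => h2 a, ← sum_filter]
  symm
  refine sum_bij' (fun r _ => t ∪ r) (fun a _ => a \ t) ?_ ?_ ?_ ?_ ?_
  · intro r _
    simp
  · intro a _
    simp only [mem_powerset]
    exact sdiff_subset_sdiff (subset_univ _) le_rfl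
  · intro r hr
    ext x
    have : x ∈ r → x ∈ univ \ t := fun h => mem_powerset.1 hr h
    simp only [mem_sdiff, mem_union, mem_univ, true_and] at *
    tauto
  · intro a ha
    exact union_sdiff_of_subset (mem_filter.1 ha).2
  · intro r hr
    have hd : Disjoint t r := by
      rw [Finset.disjoint_left]
      intro x hx hxr
      have := (mem_powerset.1 hr) hxr
      simp at this
      exact this hx
    have e1 : (t ∪ r) \ t = r := by
      rw [union_sdiff_left]; exact sdiff_eq_self_of_disjoint hd.symm
    have e2 : univ \ (t ∪ r) = (univ \ t) \ r := by
      ext x; simp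
    simp only [phaseW, subset_univ, if_true, subset_union_left, e1, e2, prod_union hd,
      prod_mul_distrib]
    ring

lemma chain_aux {V : Type*} [Fintype V] [DecidableEq V] (m : ℕ) :
    ∀ (p : Fin (m + 1) → V → ℝ) (F : Finset V → ℝ),
    ∑ s : Fin (m + 1) → Finset V,
      phaseW (p 0) univ (s 0) * (∏ j : Fin m, phaseW (p j.succ) (s j.castSucc) (s j.succ))
        * F (s (Fin.last m))
      = ∑ t : Finset V, phaseW (fun u => ∏ j, p j u) univ t * F t := by
  induction m with
  | zero =>
    intro p F
    rw [← (Equiv.funUnique (Fin 1) (Finset V)).symm.sum_comp]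
    simp
  | succ m ih =>
    intro p F
    rw [← (Fin.snocEquiv (fun _ : Fin (m + 2) => Finset V)).sum_comp, Fintype.sum_prod_type]
    have hL : ∀ (t : Finset V) (s : Fin (m + 1) → Finset V),
        (Fin.snocEquiv (fun _ : Fin (m + 2) => Finset V)) (t, s)
          = (Fin.snoc s t : Fin (m + 2) → Finset V) := fun _ _ => rfl
    have h0 : ∀ (t : Finset V) (s : Fin (m + 1) → Finset V),
        (Fin.snoc s t : Fin (m + 2) → Finset V) 0 = s 0 := by
      intro t s
      exact Fin.snoc_castSucc (α := fun _ => Finset V) t s 0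
    have hs : ∀ (t : Finset V) (s : Fin (m + 1) → Finset V) (j : Fin m),
        (Fin.snoc s t : Fin (m + 2) → Finset V) j.castSucc.succ = s j.succ := by
      intro t s j
      exact Fin.snoc_castSucc (α := fun _ => Finset V) t s j.succ
    simp only [hL, Fin.prod_univ_castSucc (n := m), h0, hs, Fin.snoc_castSucc, Fin.succ_last,
      Fin.snoc_last]
    refine sum_congr rfl fun t _ => ?_
    have := ih (fun j => p j.castSucc) (fun a => phaseW (p (Fin.last (m + 1))) a t)
    have h2 : phaseW (fun u => ∏ j, p j u) univ t =
        phaseW (fun u => (∏ j : Fin (m + 1), p j.castSucc u) * p (Fin.last (m + 1)) u) univ t := by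
      congr 1
      funext u
      exact Fin.prod_univ_castSucc _
    rw [h2, ← phaseW_comp, ← this, sum_mul]
    refine sum_congr rfl fun s _ => ?_
    simp only [Fin.castSucc_zero, Fin.succ_castSucc]
    ring

/-- **Chain-collapse identity (exact case of Lemma 3, method of joint reliability).**
The sum over nested chains `univ ⊇ s 0 ⊇ s 1 ⊇ … ⊇ s m` with `k ≤ |s m|` of the
phase-wise products collapses to a single sum over subsets, with the joint
reliability `∏ j, p j u` of each node. -/
theorem chain_collapse_joint_reliability
    {V : Type*} [Fintype V] [DecidableEq V]
    (m : ℕ) (k : ℕ) (p : Fin (m + 1) → V → ℝ)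
    (hp0 : ∀ j u, 0 ≤ p j u) (hp1 : ∀ j u, p j u ≤ 1) :
    (∑ s ∈ Finset.univ.filter
        (fun s : Fin (m + 1) → Finset V =>
          (∀ j : Fin m, s j.succ ⊆ s j.castSucc) ∧ k ≤ (s (Fin.last m)).card),
      ∏ j : Fin (m + 1),
        ((∏ u ∈ s j, p j u) *
          ∏ v ∈ (if j = 0 then Finset.univ else s (j - 1)) \ s j, (1 - p j v))) =
      ∑ s ∈ Finset.univ.filter (fun s : Finset V => k ≤ s.card),
        (∏ u ∈ s, ∏ j : Fin (m + 1), p j u) *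
          ∏ v ∈ Finset.univ \ s, (1 - ∏ j : Fin (m + 1), p j v) := by
  have key := chain_aux m p (fun t => if k ≤ t.card then 1 else 0)
  simp only [mul_ite, mul_one, mul_zero] at key
  rw [← sum_filter (fun t : Finset V => k ≤ t.card)] at key
  have hR : ∀ t : Finset V, phaseW (fun u => ∏ j, p j u) univ t =
      (∏ u ∈ t, ∏ j : Fin (m + 1), p j u) *
          ∏ v ∈ Finset.univ \ t, (1 - ∏ j : Fin (m + 1), p j v) := by
    intro t
    simp [phaseW]
  simp only [hR] at key
  rw [← key, sum_filter]
  refine sum_congr rfl fun s _ => ?_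
  by_cases hk : k ≤ (s (Fin.last m)).card
  · by_cases hc : ∀ j : Fin m, s j.succ ⊆ s j.castSucc
    · rw [if_pos ⟨hc, hk⟩, if_pos hk, Fin.prod_univ_succ]
      congr 1
      · simp [phaseW]
      · refine prod_congr rfl fun j _ => ?_
        have hj : (j.succ : Fin (m + 1)) - 1 = j.castSucc := by
          rw [sub_eq_iff_eq_add, Fin.coeSucc_eq_succ]
        rw [if_neg (Fin.succ_ne_zero j), hj, phaseW, if_pos (hc j)]
    · rw [if_neg (fun h => hc h.1), if_pos hk]
      push Not at hc
      obtain ⟨j, hj⟩ := hc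
      rw [prod_eq_zero (mem_univ j) (by simp [phaseW, hj]), mul_zero]
  · rw [if_neg (fun h => hk h.2), if_neg hk]
end

section
/- Power series method (Lemma 4): let Ω be a finite set with |Ω| = n, f a natural number with f < n, and q : Ω → ℝ (the joint failure rates). Then 1 − ∑_{s ⊆ Ω, |s| ≥ n−f} ∏_{u ∈ s} (1 − q(u)) · ∏_{v ∈ Ω \ s} q(v) = ∑_{t=f+1}^{n} (−1)^{t−f−1} · C(t−1, f) · Q_t, where Q_t = ∑_{s ⊆ Ω, |s| = t} ∏_{u ∈ s} q(u) and C(·,·) denotes the binomial coefficient. -/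
open Finset

/-- Coefficient of the degree `t` part of the probability of fewer than `F` failures. -/
def psCoeff : ℕ → ℕ → ℝ
  | 0, _ => 0
  | _ + 1, 0 => 1
  | f + 1, t + 1 => (-1) ^ (t + f + 1) * (t.choose f : ℝ)

lemma psCoeff_rec (F t : ℕ) :
    psCoeff (F + 1) (t + 1) = psCoeff F t - psCoeff (F + 1) t := by
  rcases F with _ | F <;> rcases t with _ | t
  · simp [psCoeff]
  · simp [psCoeff, pow_succ]
  · simp [psCoeff]
  · simp only [psCoeff, Nat.choose_succ_succ]
    push_cast
    ring

lemma ps_aux {V : Type*} [DecidableEq V] (q : V → ℝ) (Ω : Finset V) : ∀ F : ℕ,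
    ∑ s ∈ Ω.powerset, (if (Ω \ s).card < F then
        (∏ u ∈ s, (1 - q u)) * ∏ v ∈ Ω \ s, q v else 0) =
      ∑ s ∈ Ω.powerset, psCoeff F s.card * ∏ u ∈ s, q u := by
  induction Ω using Finset.induction_on with
  | empty =>
    intro F
    rcases F with _ | F <;> simp [psCoeff]
  | insert a Ω ha ih =>
    intro F
    rcases F with _ | F
    · simp [psCoeff]
    rw [sum_powerset_insert ha, sum_powerset_insert ha]
    have h1 : ∀ s ∈ Ω.powerset, (if (insert a Ω \ s).card < F + 1 then
        (∏ u ∈ s, (1 - q u)) * ∏ v ∈ insert a Ω \ s, q v else 0) =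
        q a * (if (Ω \ s).card < F then
        (∏ u ∈ s, (1 - q u)) * ∏ v ∈ Ω \ s, q v else 0) := by
      intro s hs
      have has : a ∉ s := fun h => ha (mem_powerset.1 hs h)
      have ha2 : a ∉ Ω \ s := fun h => ha (mem_sdiff.1 h).1
      rw [insert_sdiff_of_notMem _ has, card_insert_of_notMem ha2, prod_insert ha2]
      simp only [add_lt_add_iff_right]
      split_ifs <;> ring
    have h2 : ∀ s ∈ Ω.powerset, (if (insert a Ω \ insert a s).card < F + 1 then
        (∏ u ∈ insert a s, (1 - q u)) * ∏ v ∈ insert a Ω \ insert a s, q v else 0) =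
        (1 - q a) * (if (Ω \ s).card < F + 1 then
        (∏ u ∈ s, (1 - q u)) * ∏ v ∈ Ω \ s, q v else 0) := by
      intro s hs
      have has : a ∉ s := fun h => ha (mem_powerset.1 hs h)
      have e : insert a Ω \ insert a s = Ω \ s := by
        ext x
        simp only [mem_sdiff, mem_insert]
        constructor
        · tauto
        · rintro ⟨hx, hxs⟩
          have : x ≠ a := fun h => ha (h ▸ hx)
          tauto
      rw [e, prod_insert has]
      split_ifs <;> ring
    have h3 : ∀ s ∈ Ω.powerset, psCoeff (F + 1) (insert a s).card * ∏ u ∈ insert a s, q u =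
        q a * (psCoeff F s.card * ∏ u ∈ s, q u) -
          q a * (psCoeff (F + 1) s.card * ∏ u ∈ s, q u) := by
      intro s hs
      have has : a ∉ s := fun h => ha (mem_powerset.1 hs h)
      rw [card_insert_of_notMem has, prod_insert has, psCoeff_rec]
      ring
    rw [sum_congr rfl h1, sum_congr rfl h2, sum_congr rfl h3, sum_sub_distrib,
      ← mul_sum, ← mul_sum, ← mul_sum, ← mul_sum, ih, ih]
    ring

/-- **Lemma 4 (power series method).** The consensus failure rate
`P_F = 1 - P_C` equals the alternating power-series expansion in the joint
failure rates `q u`, a polynomial identity. -/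
theorem power_series_method
    {V : Type*} [DecidableEq V]
    (Ω : Finset V) (f : ℕ) (hf : f < Ω.card) (q : V → ℝ) :
    1 - ∑ s ∈ Ω.powerset.filter (fun s => Ω.card - f ≤ s.card),
          (∏ u ∈ s, (1 - q u)) * ∏ v ∈ Ω \ s, q v =
      ∑ t ∈ Finset.Icc (f + 1) Ω.card,
        (-1 : ℝ) ^ (t - f - 1) * ((t - 1).choose f : ℝ) *
          ∑ s ∈ Ω.powerset.filter (fun s => s.card = t), ∏ u ∈ s, q u := by
  have hL : ∑ s ∈ Ω.powerset.filter (fun s => Ω.card - f ≤ s.card),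
          (∏ u ∈ s, (1 - q u)) * ∏ v ∈ Ω \ s, q v =
      ∑ s ∈ Ω.powerset, psCoeff (f + 1) s.card * ∏ u ∈ s, q u := by
    rw [← ps_aux, sum_filter]
    refine sum_congr rfl fun s hs => ?_
    have hc := card_sdiff_add_card_eq_card (mem_powerset.1 hs)
    have : (Ω.card - f ≤ s.card) ↔ (Ω \ s).card < f + 1 := by omega
    simp only [this]
  have hR : ∑ t ∈ Finset.Icc (f + 1) Ω.card,
        (-1 : ℝ) ^ (t - f - 1) * ((t - 1).choose f : ℝ) *
          ∑ s ∈ Ω.powerset.filter (fun s => s.card = t), ∏ u ∈ s, q u =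
      ∑ s ∈ Ω.powerset, ((if s = ∅ then 1 else 0) - psCoeff (f + 1) s.card * ∏ u ∈ s, q u) := by
    simp only [mul_sum, sum_filter]
    rw [sum_comm]
    refine sum_congr rfl fun s hs => ?_
    have hc := card_le_card (mem_powerset.1 hs)
    simp only [mul_ite, mul_zero, sum_ite_eq, mem_Icc]
    rcases s.eq_empty_or_nonempty with rfl | hne
    · simp [psCoeff]
    · rw [if_neg hne.ne_empty]
      obtain ⟨t, ht⟩ := Nat.exists_eq_succ_of_ne_zero hne.card_ne_zero
      rw [ht] at hc ⊢
      simp only [Nat.succ_eq_add_one] at hc ⊢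
      simp only [psCoeff]
      split_ifs with h
      · obtain ⟨k, rfl⟩ := Nat.exists_eq_add_of_le (show f ≤ t by omega)
        have e1 : f + k + 1 - f - 1 = k := by omega
        have e2 : (-1 : ℝ) ^ (f + k + f + 1) = -(-1) ^ k := by
          rw [show f + k + f + 1 = 2 * f + k + 1 by ring, pow_succ, pow_add, pow_mul]
          simp
        rw [e1, e2, Nat.add_sub_cancel]
        ring
      · rw [Nat.choose_eq_zero_of_lt (by omega)]
        simp
  rw [hL, hR, sum_sub_distrib]
  simp
end

section
/- First-term truncation bound (rigorous form of Corollary 3): let Ω be a finite set with |Ω| = n, f a natural number with f < n, and q : Ω → [0,1]. Then the consensus failure rate satisfies 1 − ∑_{s ⊆ Ω, |s| ≥ n−f} ∏_{u ∈ s} (1 − q(u)) · ∏_{v ∈ Ω \ s} q(v) ≤ Q_{f+1}, where Q_{f+1} = ∑_{s ⊆ Ω, |s| = f+1} ∏_{u ∈ s} q(u). -/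
open Finset

lemma total_weight {V : Type*} [DecidableEq V] (A : Finset V) (q : V → ℝ) :
    ∑ s ∈ A.powerset, (∏ u ∈ s, (1 - q u)) * ∏ v ∈ A \ s, q v = 1 := by
  rw [← Finset.prod_add]
  simp

lemma weight_disjoint {V : Type*} [DecidableEq V] (Ω T : Finset V) (hT : T ⊆ Ω) (q : V → ℝ) :
    ∑ s ∈ (Ω \ T).powerset, (∏ u ∈ s, (1 - q u)) * ∏ v ∈ Ω \ s, q v = ∏ u ∈ T, q u := by
  have h : ∀ s ∈ (Ω \ T).powerset, (∏ u ∈ s, (1 - q u)) * ∏ v ∈ Ω \ s, q v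
      = (∏ u ∈ T, q u) * ((∏ u ∈ s, (1 - q u)) * ∏ v ∈ (Ω \ T) \ s, q v) := by
    intro s hs
    rw [Finset.mem_powerset] at hs
    have h1 : Ω \ s = T ∪ ((Ω \ T) \ s) := by
      ext x
      have := @hs x
      have := @hT x
      simp only [mem_sdiff, mem_union] at *
      tauto
    have h2 : Disjoint T ((Ω \ T) \ s) := by
      rw [Finset.disjoint_left]
      intro x hx
      simp [hx]
    rw [h1, Finset.prod_union h2]
    ring
  rw [Finset.sum_congr rfl h, ← Finset.mul_sum, total_weight, mul_one]

/-- **Corollary 3 (first-term truncation), rigorous upper-bound form.** The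
consensus failure rate is bounded above by the first term `Q_{f+1}` of the power
series of Lemma 4. -/
theorem failure_rate_le_first_term
    {V : Type*} [DecidableEq V]
    (Ω : Finset V) (f : ℕ) (hf : f < Ω.card) (q : V → ℝ)
    (hq0 : ∀ u ∈ Ω, 0 ≤ q u) (hq1 : ∀ u ∈ Ω, q u ≤ 1) :
    1 - ∑ s ∈ Ω.powerset.filter (fun s => Ω.card - f ≤ s.card),
          (∏ u ∈ s, (1 - q u)) * ∏ v ∈ Ω \ s, q v ≤
      ∑ s ∈ Ω.powerset.filter (fun s => s.card = f + 1), ∏ u ∈ s, q u := by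
  have hw : ∀ s ∈ Ω.powerset, 0 ≤ (∏ u ∈ s, (1 - q u)) * ∏ v ∈ Ω \ s, q v := by
    intro s hs
    rw [Finset.mem_powerset] at hs
    exact mul_nonneg (Finset.prod_nonneg fun u hu => sub_nonneg.2 (hq1 u (hs hu)))
      (Finset.prod_nonneg fun u hu => hq0 u (Finset.mem_sdiff.1 hu).1)
  have ht := total_weight Ω q
  rw [← Finset.sum_filter_add_sum_filter_not Ω.powerset (fun s => Ω.card - f ≤ s.card)] at ht
  rw [sub_eq_of_eq_add' ht.symm]
  have hR : ∑ s ∈ Ω.powerset.filter (fun s => s.card = f + 1), ∏ u ∈ s, q u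
      = ∑ T ∈ Ω.powerset.filter (fun s => s.card = f + 1),
        ∑ s ∈ (Ω \ T).powerset, (∏ u ∈ s, (1 - q u)) * ∏ v ∈ Ω \ s, q v := by
    refine Finset.sum_congr rfl fun T hT => (weight_disjoint Ω T ?_ q).symm
    exact Finset.mem_powerset.1 (Finset.mem_filter.1 hT).1
  rw [hR, Finset.sum_comm' (t' := Ω.powerset)
    (s' := fun s => (Ω.powerset.filter (fun T => T.card = f + 1)).filter
      (fun T => s ⊆ Ω \ T))]
  · refine le_trans (Finset.sum_le_sum (fun s hs => ?_))
      (Finset.sum_le_sum_of_subset_of_nonneg (Finset.filter_subset _ _) (fun s hs _ => ?_))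
    · rw [Finset.mem_filter] at hs
      obtain ⟨hs, hc⟩ := hs
      have hsub := Finset.mem_powerset.1 hs
      have hcard : f + 1 ≤ (Ω \ s).card := by
        rw [Finset.card_sdiff_of_subset hsub]
        omega
      obtain ⟨T, hT, hTc⟩ := Finset.exists_subset_card_eq hcard
      refine Finset.single_le_sum
        (f := fun _ : Finset V => (∏ u ∈ s, (1 - q u)) * ∏ v ∈ Ω \ s, q v)
        (fun _ _ => hw s hs) (a := T) ?_
      simp only [Finset.mem_filter, Finset.mem_powerset]
      refine ⟨⟨hT.trans Finset.sdiff_subset, hTc⟩, fun x hx => ?_⟩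
      exact Finset.mem_sdiff.2 ⟨hsub hx, fun hxT => (Finset.mem_sdiff.1 (hT hxT)).2 hx⟩
    · exact Finset.sum_nonneg fun _ _ => hw s hs
  · intro T s
    simp only [Finset.mem_filter, Finset.mem_powerset]
    exact ⟨fun h => ⟨⟨h.1, h.2⟩, h.2.trans Finset.sdiff_subset⟩, fun h => h.1⟩
end

section
/- Degenerate power series identity: for every real q, every natural number n ≥ 1, and every natural number f with f < n, the binomial tail satisfies ∑_{x=f+1}^{n} C(n, x) · q^x · (1 − q)^{n−x} = ∑_{t=f+1}^{n} (−1)^{t−f−1} · C(t−1, f) · C(n, t) · q^t, where C(·,·) denotes the binomial coefficient. -/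
open Finset

lemma key_aux (q : ℝ) (k m : ℕ) :
    ∑ t ∈ Finset.Icc k (k + m), (-1 : ℝ) ^ (t - k) * (t.choose k : ℝ) *
      ((k + m).choose t : ℝ) * q ^ t = ((k + m).choose k : ℝ) * q ^ k * (1 - q) ^ m := by
  have h1 : (1 - q) ^ m = ∑ j ∈ Finset.range (m + 1), (-q) ^ j * (m.choose j : ℝ) := by
    rw [show (1 - q) = -q + 1 by ring, add_pow]
    simp
  rw [h1, Finset.mul_sum, ← Finset.Ico_add_one_right_eq_Icc, Finset.sum_Ico_eq_sum_range,
    show k + m + 1 - k = m + 1 by omega]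
  refine Finset.sum_congr rfl fun j hj => ?_
  have hj' : j ≤ m := by simpa [Nat.lt_succ_iff] using hj
  have h2 := Nat.choose_mul (n := k + m) (k := k + j) (s := k) (by omega)
  rw [Nat.add_sub_cancel_left, Nat.add_sub_cancel_left] at h2
  have h3 : ((k + m).choose (k + j) : ℝ) * ((k + j).choose k : ℝ) =
    ((k + m).choose k : ℝ) * (m.choose j : ℝ) := by exact_mod_cast h2
  rw [Nat.add_sub_cancel_left, neg_pow q j, pow_add]
  linear_combination (-1 : ℝ) ^ j * q ^ k * q ^ j * h3

lemma tail_aux (q : ℝ) (m : ℕ) : ∀ f n : ℕ, n = f + m →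
    (∑ x ∈ Finset.Icc (f + 1) n, (n.choose x : ℝ) * q ^ x * (1 - q) ^ (n - x)) =
      ∑ t ∈ Finset.Icc (f + 1) n,
        (-1 : ℝ) ^ (t - f - 1) * ((t - 1).choose f : ℝ) * (n.choose t : ℝ) * q ^ t := by
  induction m with
  | zero => intro f n h; subst h; simp
  | succ m ih =>
    intro f n h
    have hI : Finset.Icc (f + 1) n = insert (f + 1) (Finset.Icc (f + 1 + 1) n) := by
      ext x; simp only [Finset.mem_Icc, Finset.mem_insert]; omega
    have hnot : f + 1 ∉ Finset.Icc (f + 1 + 1) n := by simp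
    have hk := key_aux q (f + 1) m
    rw [show f + 1 + m = n by omega] at hk
    have ihh := ih (f + 1) n (by omega)
    rw [hI, Finset.sum_insert hnot, ihh, show n - (f + 1) = m by omega, ← hk, hI,
      Finset.sum_insert hnot, Finset.sum_insert hnot, add_assoc, ← Finset.sum_add_distrib]
    congr 1
    · simp
    · refine Finset.sum_congr rfl fun t ht => ?_
      rw [Finset.mem_Icc] at ht
      obtain ⟨s, rfl⟩ := Nat.exists_eq_add_of_le ht.1
      rw [show f + 1 + 1 + s - (f + 1) - 1 = s by omega,
        show f + 1 + 1 + s - f - 1 = s + 1 by omega,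
        show f + 1 + 1 + s - (f + 1) = s + 1 by omega,
        show f + 1 + 1 + s - 1 = f + 1 + s by omega,
        show f + 1 + 1 + s = (f + 1 + s) + 1 by omega, Nat.choose_succ_succ (f + 1 + s) f]
      push_cast
      ring

/-- **Degenerate power series identity.** The binomial tail probability equals the
alternating power-series expansion, a polynomial identity in `q`. -/
theorem binomial_tail_power_series (q : ℝ) (n f : ℕ) (hn : 1 ≤ n) (hf : f < n) :
    (∑ x ∈ Finset.Icc (f + 1) n, (n.choose x : ℝ) * q ^ x * (1 - q) ^ (n - x)) =
      ∑ t ∈ Finset.Icc (f + 1) n,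
        (-1 : ℝ) ^ (t - f - 1) * ((t - 1).choose f : ℝ) * (n.choose t : ℝ) * q ^ t :=  by
  exact tail_aux q (n - f) f n (by omega)
end

section
/- Consensus reliability of W consecutive instances (rigorous lower-bound form of Theorem 5): let Ω be a finite set of n nodes, f < n, p_N : Ω → [0,1] the per-node non-faulty probabilities, and for each subset S ⊆ Ω let w(S) = ∏_{u ∈ S} p_N(u) · ∏_{v ∈ Ω \ S} (1 − p_N(v)) and let a(S) ∈ [0,1] be the conditional single-instance consensus reliability given non-faulty set S. Define P_C = ∑_{S ⊆ Ω, |S| ≥ n−f} w(S)·a(S), P_C^{Node} = ∑_{S ⊆ Ω, |S| ≥ n−f} w(S), and the W-instance reliability P_C^{Mul} = ∑_{S ⊆ Ω, |S| ≥ n−f} w(S)·a(S)^W. Then for every natural number W ≥ 1, P_C^{Mul} ≥ W·P_C − (W − 1)·P_C^{Node}. -/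
open Finset

/-- **Theorem 5 (consensus reliability of `W` consecutive instances), rigorous
lower-bound form.** With `w S` the probability that the non-faulty set is exactly
`S` and `a S` the conditional single-instance reliability, the `W`-instance
reliability `P_C^Mul` is at least `W·P_C - (W-1)·P_C^Node`. -/
theorem multi_instance_reliability_lower_bound
    {V : Type*} [DecidableEq V]
    (Ω : Finset V) (f : ℕ) (hf : f < Ω.card)
    (pN : V → ℝ) (hpN0 : ∀ u ∈ Ω, 0 ≤ pN u) (hpN1 : ∀ u ∈ Ω, pN u ≤ 1)
    (a : Finset V → ℝ) (ha0 : ∀ S, 0 ≤ a S) (ha1 : ∀ S, a S ≤ 1)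
    (W : ℕ) (hW : 1 ≤ W) :
    (∑ S ∈ Ω.powerset.filter (fun S => Ω.card - f ≤ S.card),
        ((∏ u ∈ S, pN u) * ∏ v ∈ Ω \ S, (1 - pN v)) * a S ^ W) ≥
      (W : ℝ) *
          (∑ S ∈ Ω.powerset.filter (fun S => Ω.card - f ≤ S.card),
            ((∏ u ∈ S, pN u) * ∏ v ∈ Ω \ S, (1 - pN v)) * a S) -
        ((W : ℝ) - 1) *
          (∑ S ∈ Ω.powerset.filter (fun S => Ω.card - f ≤ S.card),
            ((∏ u ∈ S, pN u) * ∏ v ∈ Ω \ S, (1 - pN v))) := by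
  rw [ge_iff_le, Finset.mul_sum, Finset.mul_sum, ← Finset.sum_sub_distrib]
  apply Finset.sum_le_sum
  intro S hS
  have hS' : S ⊆ Ω := Finset.mem_powerset.1 (Finset.mem_filter.1 hS).1
  have hw : 0 ≤ (∏ u ∈ S, pN u) * ∏ v ∈ Ω \ S, (1 - pN v) := by
    apply mul_nonneg
    · exact Finset.prod_nonneg fun u hu => hpN0 u (hS' hu)
    · exact Finset.prod_nonneg fun v hv =>
        sub_nonneg.2 (hpN1 v (Finset.mem_sdiff.1 hv).1)
  have hb : 1 + (W : ℝ) * (a S - 1) ≤ a S ^ W := by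
    have h := one_add_mul_le_pow (a := a S - 1) (by linarith [ha0 S]) W
    simpa using h
  have h2 := mul_le_mul_of_nonneg_left hb hw
  linarith
end
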